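/- arXiv:1506.01873 — 6 statements merged into one kernel-verified Lean document; each statement's English description precedes it below -/
import Mathlib

section
/- Let 𝐯 = v₁…vₙ be a word over VΓ with n ≥ 2 and let 𝒱 = {(e₁,z₁),…,(e_r,z_r)} ∈ 𝒫₂(𝐯) be a Γ-admissible pair partition. Then there exists an index m ∈ {1,…,r} such that for every a with e_m < a < z_m one has (v_{e_m}, v_a) ∈ EΓ. -/
/-!
Choose the first leg `z` that closes its pair. Every leg `a` strictly between `f z` and `z` opens
its pair, and that pair cannot close before `z`, so it crosses `(f z, z)`; admissibility then makes
the two letters adjacent.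
-/

section PairPartition

variable {ι : Type*} [LinearOrder ι] {f : ι → ι}

theorem exists_apply_lt_self [Nonempty ι] (hinv : Function.Involutive f) (hfix : ∀ k, f k ≠ k) :
    ∃ z, f z < z := by
  obtain ⟨k⟩ := ‹Nonempty ι›
  rcases (hfix k).lt_or_gt with hclose | hopen
  · exact ⟨k, hclose⟩
  · exact ⟨f k, by rwa [hinv k]⟩

theorem lt_apply_of_minimal_apply_lt_self (hinv : Function.Involutive f) (hfix : ∀ k, f k ≠ k)
    {z a : ι} (hz : Minimal (fun k => f k < k) z) (hza : f z < a) (haz : a < z) : z < f a := by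
  have hopen : a < f a := (hfix a).symm.lt_of_le (not_lt.mp (hz.not_prop_of_lt haz))
  have hne : f a ≠ z := fun h => hza.ne (hinv.eq_iff.mp h).symm
  refine hne.symm.lt_of_le (not_lt.mp fun hlt => hz.not_prop_of_lt hlt ?_)
  rwa [hinv a]

theorem stmt_3_general [WellFoundedLT ι] [Nonempty ι] {r : ι → ι → Prop}
    (hinv : Function.Involutive f) (hfix : ∀ k, f k ≠ k)
    (hadm : ∀ k l, k < l → l < f k → f k < f l → r k l) :
    ∃ m, m < f m ∧ ∀ a, m < a → a < f m → r m a := by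
  obtain ⟨z, hz⟩ := exists_minimal_of_wellFoundedLT _ (exists_apply_lt_self hinv hfix)
  refine ⟨f z, by simpa only [hinv z] using hz.prop, fun a hza haz => hadm _ a hza haz ?_⟩
  rw [hinv z] at haz ⊢
  exact lt_apply_of_minimal_apply_lt_self hinv hfix hz hza haz

end PairPartition

/-- Let `𝐯 = v₁…vₙ` be a word (with `n ≥ 2`) over the vertices of a
simplicial graph `Γ` and let `𝒱 ∈ 𝒫₂(𝐯)` be a `Γ`-admissible pair partition (encoded by a
fixed-point-free involution `f` of `Fin n`, pairing `k` with `f k`, with `v (f k) = v k`;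
`Γ`-admissibility says that `I_Γ(𝒱)` is empty, i.e. whenever `k < l < f k < f l` the letters
`v k` and `v l` are adjacent).  Then there is a pair `(m, f m)` with `m < f m` such that every
letter strictly between the legs of that pair is adjacent to `v m`. -/
theorem stmt_3 {V : Type*} (Γ : SimpleGraph V)
    {n : ℕ} (hn : 2 ≤ n) (v : Fin n → V)
    (f : Fin n → Fin n) (hinv : Function.Involutive f)
    (hfix : ∀ k, f k ≠ k) (hlet : ∀ k, v (f k) = v k)
    (hadm : ∀ k l : Fin n, k < l → l < f k → f k < f l → Γ.Adj (v k) (v l)) :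
    ∃ m : Fin n, m < f m ∧ ∀ a : Fin n, m < a → a < f m → Γ.Adj (v m) (v a) := by
  have : NeZero n := ⟨by lia⟩
  exact stmt_3_general hinv hfix hadm
end

section
/- Let 𝐯 = v₁…vₙ be a word over VΓ, let 𝒱 ∈ 𝒫(𝐯) be a partition having at least one block consisting of a single element, and let (i₁,…,iₙ) be a tuple of indices of class 𝒱. Then φ(b_{i₁,v₁} b_{i₂,v₂} ⋯ b_{iₙ,vₙ}) = 0. -/
/-!
Distinct letters commute up to a scalar, so equal letters can be collected:
`b_{x₁} ⋯ b_{xₙ}` is a scalar multiple of a product of powers of distinct letters, whose exponents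
are the multiplicities in the word. On such a product `φ` factorizes, and a letter that occurs
exactly once contributes the factor `φ(b_x) = 0`.
-/

section ListCount

variable {ι : Type*} [DecidableEq ι]

theorem perm_flatMap_dedup_replicate_count (L : List ι) :
    L.Perm (L.dedup.flatMap fun x => List.replicate (L.count x) x) := by
  refine List.perm_iff_count.2 fun a => ?_
  calc L.count a = L.dedup.count a • L.count a := by
        by_cases ha : a ∈ L <;> simp [List.count_dedup, ha, List.count_eq_zero_of_not_mem]
    _ = (L.dedup.map fun x => (List.replicate (L.count x) x).count a).sum := by
        rw [List.sum_map_eq_nsmul_single a, List.count_replicate_self]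
        intro x hx _
        simp [List.count_replicate, hx]
    _ = _ := List.count_flatMap.symm

theorem count_ofFn {n : ℕ} (x : Fin n → ι) (a : ι) :
    (List.ofFn x).count a = Finset.card {k | x k = a} := by
  simp [← Multiset.coe_count, ← Fin.univ_val_map, Multiset.count_map, Finset.card_def, eq_comm]

theorem count_ofFn_eq_one {n : ℕ} {x : Fin n → ι} {k₀ : Fin n}
    (hk₀ : ∀ k, x k = x k₀ → k = k₀) : (List.ofFn x).count (x k₀) = 1 := by
  rw [count_ofFn, Finset.card_eq_one]
  exact ⟨k₀, by ext k; simpa using ⟨hk₀ k, fun h => h ▸ rfl⟩⟩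

end ListCount

section CommuteUpToScalar

variable {ι R A : Type*} [Monoid R] [Monoid A] [MulAction R A] [IsScalarTower R A A]
  [SMulCommClass R A A] {b : ι → A}

theorem exists_map_prod_eq_smul_of_perm (hb : ∀ x y, ∃ q : R, b x * b y = q • (b y * b x))
    {L M : List ι} (hLM : L.Perm M) : ∃ q : R, (L.map b).prod = q • (M.map b).prod := by
  induction hLM with
  | nil => exact ⟨1, (one_smul R _).symm⟩
  | cons x _ ih =>
    obtain ⟨q, hq⟩ := ih
    exact ⟨q, by simp only [List.map_cons, List.prod_cons, hq, mul_smul_comm]⟩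
  | swap x y L =>
    obtain ⟨q, hq⟩ := hb y x
    exact ⟨q, by simp only [List.map_cons, List.prod_cons, ← mul_assoc, hq, smul_mul_assoc]⟩
  | trans _ _ ih₁ ih₂ =>
    obtain ⟨q₁, hq₁⟩ := ih₁
    obtain ⟨q₂, hq₂⟩ := ih₂
    exact ⟨q₁ * q₂, by rw [hq₁, hq₂, mul_smul]⟩

theorem exists_map_prod_eq_smul_prod_dedup_pow_count [DecidableEq ι]
    (hb : ∀ x y, ∃ q : R, b x * b y = q • (b y * b x)) (L : List ι) :
    ∃ q : R, (L.map b).prod = q • (L.dedup.map fun x => b x ^ L.count x).prod := by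
  obtain ⟨q, hq⟩ := exists_map_prod_eq_smul_of_perm hb (perm_flatMap_dedup_replicate_count L)
  refine ⟨q, hq.trans ?_⟩
  simp only [List.flatMap_def, List.map_flatten, List.prod_flatten, List.map_map,
    Function.comp_def, List.map_replicate, List.prod_replicate]

end CommuteUpToScalar

theorem map_prod_pow_of_nodup {ι A R : Type*} [Monoid A] [CommMonoid R] {φ : A → R} {b : ι → A}
    (hφ : ∀ (k : ℕ) (idx : Fin k → ι), Function.Injective idx → ∀ l : Fin k → ℕ,
      φ (List.ofFn fun j => b (idx j) ^ l j).prod = ∏ j, φ (b (idx j) ^ l j))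
    {L : List ι} (hL : L.Nodup) (m : ι → ℕ) :
    φ (L.map fun x => b x ^ m x).prod = (L.map fun x => φ (b x ^ m x)).prod := by
  have h := hφ L.length L.get hL.injective_get fun j => m (L.get j)
  simpa only [← List.prod_ofFn, List.get_eq_getElem,
    List.ofFn_getElem_eq_map L fun x => b x ^ m x,
    List.ofFn_getElem_eq_map L fun x => φ (b x ^ m x)] using h

theorem stmt_4_general {ι R A : Type*} [CommSemiring R] [Semiring A] [Algebra R A]
    (φ : A →ₗ[R] R) (b : ι → A)
    (hφ : ∀ (k : ℕ) (idx : Fin k → ι), Function.Injective idx → ∀ l : Fin k → ℕ,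
      φ (List.ofFn fun j => b (idx j) ^ l j).prod = ∏ j, φ (b (idx j) ^ l j))
    (hb : ∀ x y, ∃ q : R, b x * b y = q • (b y * b x))
    {n : ℕ} (x : Fin n → ι) (k₀ : Fin n) (hk₀ : ∀ k, x k = x k₀ → k = k₀)
    (hmean : φ (b (x k₀)) = 0) :
    φ (List.ofFn fun k => b (x k)).prod = 0 := by
  classical
  set L := List.ofFn x with hL
  obtain ⟨q, hq⟩ := exists_map_prod_eq_smul_prod_dedup_pow_count hb L
  have hmem : x k₀ ∈ L.dedup := by simp [hL]
  have hfactor : φ (b (x k₀) ^ L.count (x k₀)) = 0 := by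
    rw [count_ofFn_eq_one hk₀, pow_one, hmean]
  have hprod : (L.dedup.map fun y => φ (b y ^ L.count y)).prod = 0 :=
    List.prod_eq_zero (List.mem_map.2 ⟨x k₀, hmem, hfactor⟩)
  calc φ (List.ofFn fun k => b (x k)).prod
      = φ (L.map b).prod := by rw [hL, List.map_ofFn, Function.comp_def]
    _ = q • (L.dedup.map fun y => φ (b y ^ L.count y)).prod := by
        rw [hq, map_smul, map_prod_pow_of_nodup hφ L.nodup_dedup]
    _ = 0 := by rw [hprod, smul_zero]

/-- In the setting of a unital complex `*`-algebra `A`, a unital linear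
functional `φ`, self-adjoint elements `b i v` (`i ∈ ℕ`, `v` a vertex of a simplicial graph
`Γ`) satisfying the factorization property (1), mean zero and covariance one (2), and the
commutation relations (3) governed by a sign function `s` which is `1` on edges of `Γ`:
if `𝐯 = v₁…vₙ` is a word, `𝒱 ∈ 𝒫(𝐯)` is a partition (encoded by a surjection
`c : Fin n → Fin p` onto its blocks, letters constant on blocks) having a singleton block,
and `(i₁,…,iₙ)` is a tuple of indices of class `𝒱`, then
`φ(b_{i₁,v₁} ⋯ b_{iₙ,vₙ}) = 0`. -/
theorem stmt_4 {V : Type*} [DecidableEq V] (Γ : SimpleGraph V)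
    {A : Type*} [Ring A] [Algebra ℂ A] [StarRing A] [StarModule ℂ A]
    (φ : A →ₗ[ℂ] ℂ) (hφ1 : φ 1 = 1)
    (b : ℕ → V → A) (hsa : ∀ i w, star (b i w) = b i w)
    (h1 : ∀ (k : ℕ) (idx : Fin k → ℕ × V), Function.Injective idx →
        ∀ l : Fin k → ℕ,
          φ (List.ofFn fun j => b (idx j).1 (idx j).2 ^ l j).prod
            = ∏ j, φ (b (idx j).1 (idx j).2 ^ l j))
    (h2 : ∀ i w, φ (b i w) = 0) (h2' : ∀ i w, φ (b i w ^ 2) = 1)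
    (s : ℕ → V → ℕ → V → ℂ)
    (hs : ∀ i w j u, s i w j u = 1 ∨ s i w j u = -1)
    (hsadj : ∀ i w j u, Γ.Adj w u → s i w j u = 1)
    (h3 : ∀ i w j u, b i w * b j u = s i w j u • (b j u * b i w))
    {n p : ℕ} (v : Fin n → V) (c : Fin n → Fin p)
    (hsurj : Function.Surjective c)
    (hletter : ∀ k l, c k = c l → v k = v l)
    (hsingleton : ∃ bl : Fin p, ∃! k, c k = bl)
    (i : Fin n → ℕ)
    (hclass : ∀ k l, (i k = i l ∧ v k = v l) ↔ c k = c l) :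
    φ (List.ofFn fun k => b (i k) (v k)).prod = 0 := by
  obtain ⟨bl, k₀, hk₀, huniq⟩ := hsingleton
  exact stmt_4_general φ (fun x => b x.1 x.2) h1 (fun x y => ⟨_, h3 x.1 x.2 y.1 y.2⟩)
    (fun k => (i k, v k)) k₀
    (fun k hk => huniq k (((hclass k k₀).1 (Prod.mk.inj hk)).trans hk₀)) (h2 _ _)
end

section
/- Let 𝐯 = v₁…vₙ be a word over VΓ with n = 2r even, let 𝒱 = {(e₁,z₁),…,(e_r,z_r)} ∈ 𝒫₂(𝐯) be a Γ-admissible pair partition, and let (i₁,…,iₙ) be a tuple of indices of class 𝒱. Then φ(b_{i₁,v₁} b_{i₂,v₂} ⋯ b_{iₙ,vₙ}) = 1. -/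
/-!
Let `x` be the first letter of the word and move it to the right until it meets its partner. A
letter whose pair lies inside the arc of `x` is passed twice, so its sign cancels; a letter whose
pair crosses that arc is passed once, with sign `1` by admissibility. Hence `x` reaches its partner
without a sign, and its square splits off to the left of a shorter admissible word. Repeating this
writes the product as a product of squares of distinct letters, on which `φ` factorises.
-/

section CommutationSigns

variable {X R A : Type*}

theorem mul_prod_map_eq_smul_of_mul_eq_smul [Monoid R] [Monoid A] [MulAction R A]
    [IsScalarTower R A A] [SMulCommClass R A A] (a : A) (c : X → A) (τ : X → R)
    (hcomm : ∀ y, a * c y = τ y • (c y * a)) (M : List X) :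
    a * (M.map c).prod = (M.map τ).prod • ((M.map c).prod * a) := by
  induction M with
  | nil => simp
  | cons y M ih =>
    simp only [List.map_cons, List.prod_cons]
    calc a * (c y * (M.map c).prod)
        = τ y • (c y * (a * (M.map c).prod)) := by
          rw [← mul_assoc, hcomm, smul_mul_assoc, mul_assoc]
      _ = (τ y * (M.map τ).prod) • (c y * (M.map c).prod * a) := by
          rw [ih, mul_smul_comm, smul_smul, mul_assoc]

theorem prod_map_eq_one_of_eq_one_or_even_count [DecidableEq X] [CommMonoid R] {τ : X → R}
    (hτ : ∀ y, τ y ^ 2 = 1) {M : List X} (hM : ∀ y ∈ M, τ y = 1 ∨ Even (M.count y)) :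
    (M.map τ).prod = 1 := by
  rw [Finset.prod_list_map_count]
  refine Finset.prod_eq_one fun y hy => ?_
  obtain hy | hy := hM y (List.mem_toFinset.1 hy)
  · rw [hy, one_pow]
  · obtain ⟨k, hk⟩ := hy
    rw [hk, ← two_mul, pow_mul, hτ, one_pow]

end CommutationSigns

section Words

variable {X : Type*}

theorem exists_strictMono_of_sublist_ofFn {n : ℕ} {g : Fin n → X} {l : List X}
    (h : l.Sublist (List.ofFn g)) :
    ∃ e : Fin l.length → Fin n, StrictMono e ∧ ∀ j, l.get j = g (e j) := by
  obtain ⟨e, he⟩ := List.sublist_iff_exists_fin_orderEmbedding_get_eq.1 h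
  exact ⟨fun j => Fin.cast List.length_ofFn (e j), fun _ _ hjk => e.strictMono hjk,
    fun j => (he j).trans (List.get_ofFn g (e j))⟩

variable [DecidableEq X]

theorem count_ofFn_eq_card {n : ℕ} (g : Fin n → X) (x : X) :
    (List.ofFn g).count x = ({k | x = g k} : Finset (Fin n)).card := by
  rw [← Multiset.coe_count, ← Fin.univ_val_map, Multiset.count_map]
  rfl

theorem exists_eq_append_cons_of_count_eq_one {L : List X} {x : X} (h : L.count x = 1) :
    ∃ M N, L = M ++ x :: N ∧ x ∉ M ∧ x ∉ N := by
  obtain ⟨M, N, rfl, hxM⟩ := List.eq_append_cons_of_mem (List.count_pos_iff.1 (h ▸ one_pos))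
  refine ⟨M, N, rfl, hxM, List.count_eq_zero.1 ?_⟩
  simpa [List.count_eq_zero.2 hxM] using h

theorem count_append_eq_two {M N : List X} {x : X}
    (hcount : ∀ y ∈ x :: (M ++ x :: N), (x :: (M ++ x :: N)).count y = 2)
    (hxM : x ∉ M) (hxN : x ∉ N) : ∀ y ∈ M ++ N, (M ++ N).count y = 2 := by
  intro y hy
  have hxy : x ≠ y := by
    rintro rfl
    exact (List.mem_append.1 hy).elim hxM hxN
  have hy' : y ∈ x :: (M ++ x :: N) := by
    simp only [List.mem_cons, List.mem_append] at hy ⊢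
    tauto
  simpa [List.count_append, hxy] using hcount y hy'

end Words

section Reduction

variable {X R A : Type*} [DecidableEq X] [CommMonoid R]

theorem prod_map_sign_eq_one {τ : X → R} (hτ : ∀ y, τ y ^ 2 = 1) {M N : List X} {x : X}
    (hcount : ∀ y ∈ M ++ N, (M ++ N).count y = 2)
    (hcross : ∀ y, [x, y, x, y].Sublist (x :: (M ++ x :: N)) → τ y = 1) :
    (M.map τ).prod = 1 := by
  refine prod_map_eq_one_of_eq_one_or_even_count hτ fun y hyM => ?_
  by_cases hyN : y ∈ N
  · have hyMxyN : [y, x, y].Sublist (M ++ x :: N) :=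
      (List.singleton_sublist.2 hyM).append ((List.singleton_sublist.2 hyN).cons_cons x)
    exact .inl (hcross y (hyMxyN.cons_cons x))
  · have hyM2 := hcount y (List.mem_append_left N hyM)
    rw [List.count_append, List.count_eq_zero.2 hyN, add_zero] at hyM2
    exact .inr (hyM2 ▸ even_two)

variable [Monoid A] [MulAction R A] [IsScalarTower R A A] [SMulCommClass R A A]

theorem exists_nodup_prod_map_eq_prod_map_sq {c : X → A} {σ : X → X → R}
    (hσ : ∀ x y, σ x y ^ 2 = 1) (hcomm : ∀ x y, c x * c y = σ x y • (c y * c x)) (L : List X)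
    (hcount : ∀ x ∈ L, L.count x = 2) (hcross : ∀ x y, [x, y, x, y].Sublist L → σ x y = 1) :
    ∃ D : List X, D.Nodup ∧ D ⊆ L ∧ (L.map c).prod = (D.map fun x => c x ^ 2).prod := by
  induction hlen : L.length using Nat.strong_induction_on generalizing L with
  | _ m ih =>
  obtain _ | ⟨x, L⟩ := L
  · exact ⟨[], by simp⟩
  have hx : L.count x = 1 := by simpa using hcount x List.mem_cons_self
  obtain ⟨M, N, rfl, hxM, hxN⟩ := exists_eq_append_cons_of_count_eq_one hx
  have hcount' := count_append_eq_two hcount hxM hxN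
  have hsub : (M ++ N).Sublist (x :: (M ++ x :: N)) :=
    ((List.Sublist.refl M).append (List.sublist_cons_self x N)).cons x
  obtain ⟨D, hD, hDsub, hprod⟩ := ih (M ++ N).length
    (by simp only [← hlen, List.length_append, List.length_cons]; lia)
    (M ++ N) hcount' (fun y z h => hcross y z (h.trans hsub)) rfl
  have hmove : c x * (M.map c).prod = (M.map c).prod * c x := by
    rw [mul_prod_map_eq_smul_of_mul_eq_smul (c x) c (σ x) (hcomm x) M,
      prod_map_sign_eq_one (hσ x) hcount' (hcross x), one_smul]
  refine ⟨x :: D, List.nodup_cons.2 ⟨fun hxD => ?_, hD⟩,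
    List.cons_subset.2 ⟨List.mem_cons_self, List.Subset.trans hDsub hsub.subset⟩, ?_⟩
  · exact (List.mem_append.1 (hDsub hxD)).elim hxM hxN
  calc ((x :: (M ++ x :: N)).map c).prod
      = c x * ((M.map c).prod * c x) * (N.map c).prod := by simp [mul_assoc]
    _ = c x ^ 2 * ((M ++ N).map c).prod := by simp [← hmove, pow_two, mul_assoc]
    _ = ((x :: D).map fun x => c x ^ 2).prod := by rw [hprod, List.map_cons, List.prod_cons]

end Reduction

section Pairings

variable {X : Type*} {n : ℕ} {g : Fin n → X} {f : Fin n → Fin n}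

theorem count_ofFn_eq_two [DecidableEq X] (hfix : ∀ k, f k ≠ k)
    (hclass : ∀ k l, g k = g l ↔ k = l ∨ f k = l) (k : Fin n) :
    (List.ofFn g).count (g k) = 2 := by
  have hblock : ({l | g k = g l} : Finset (Fin n)) = {k, f k} := by
    ext l
    simp [hclass, eq_comm]
  rw [count_ofFn_eq_card, hblock, Finset.card_pair (hfix k).symm]

theorem exists_crossing_of_sublist_ofFn (hclass : ∀ k l, g k = g l ↔ k = l ∨ f k = l) {x y : X}
    (h : [x, y, x, y].Sublist (List.ofFn g)) :
    ∃ k l, k < l ∧ l < f k ∧ f k < f l ∧ g k = x ∧ g l = y := by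
  obtain ⟨e, he, hge⟩ := exists_strictMono_of_sublist_ofFn h
  have h01 : e 0 < e 1 := he (show (0 : Fin 4) < 1 by decide)
  have h12 : e 1 < e 2 := he (show (1 : Fin 4) < 2 by decide)
  have h23 : e 2 < e 3 := he (show (2 : Fin 4) < 3 by decide)
  have hf0 : f (e 0) = e 2 :=
    ((hclass _ _).1 ((hge 0).symm.trans (hge 2))).resolve_left (h01.trans h12).ne
  have hf1 : f (e 1) = e 3 :=
    ((hclass _ _).1 ((hge 1).symm.trans (hge 3))).resolve_left (h12.trans h23).ne
  exact ⟨e 0, e 1, h01, hf0 ▸ h12, hf0 ▸ hf1 ▸ h23, (hge 0).symm, (hge 1).symm⟩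

end Pairings

/-- `X` plays the role of the pairs `(i, v)`; the graph enters only through the signs of crossing
pairs. -/
theorem stmt_5_general {X R A B : Type*} [CommMonoid R] [Monoid A] [MulAction R A]
    [IsScalarTower R A A] [SMulCommClass R A A] [CommMonoid B] (φ : A → B) (c : X → A)
    (hfactor : ∀ (k : ℕ) (idx : Fin k → X), Function.Injective idx →
      φ (List.ofFn fun j => c (idx j) ^ 2).prod = ∏ j, φ (c (idx j) ^ 2))
    (hsq : ∀ x, φ (c x ^ 2) = 1)
    (σ : X → X → R) (hσ : ∀ x y, σ x y ^ 2 = 1)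
    (hcomm : ∀ x y, c x * c y = σ x y • (c y * c x))
    {n : ℕ} (g : Fin n → X) (f : Fin n → Fin n) (hfix : ∀ k, f k ≠ k)
    (hcross : ∀ k l, k < l → l < f k → f k < f l → σ (g k) (g l) = 1)
    (hclass : ∀ k l, g k = g l ↔ k = l ∨ f k = l) :
    φ (List.ofFn fun k => c (g k)).prod = 1 := by
  classical
  have hcount : ∀ x ∈ List.ofFn g, (List.ofFn g).count x = 2 :=
    List.forall_mem_ofFn_iff.2 (count_ofFn_eq_two hfix hclass)
  have hsign : ∀ x y, [x, y, x, y].Sublist (List.ofFn g) → σ x y = 1 := by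
    intro x y h
    obtain ⟨k, l, hkl, hlk, hfkl, rfl, rfl⟩ := exists_crossing_of_sublist_ofFn hclass h
    exact hcross k l hkl hlk hfkl
  obtain ⟨D, hD, -, hprod⟩ := exists_nodup_prod_map_eq_prod_map_sq hσ hcomm _ hcount hsign
  calc φ (List.ofFn fun k => c (g k)).prod
      = φ (D.map fun x => c x ^ 2).prod := by rw [← hprod, List.map_ofFn]; rfl
    _ = φ (List.ofFn fun j => c (D.get j) ^ 2).prod := by
      rw [← List.ofFn_getElem_eq_map]; rfl
    _ = ∏ j, φ (c (D.get j) ^ 2) := hfactor _ _ (List.nodup_iff_injective_get.1 hD)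
    _ = 1 := Finset.prod_eq_one fun _ _ => hsq _

/-- In the setting of a unital complex `*`-algebra `A`, a unital linear
functional `φ`, self-adjoint elements `b i v` satisfying properties (1)–(3) of Theorem 3
(`Speicher type limit theorem`): if `𝐯 = v₁…vₙ` is a word, `𝒱 ∈ 𝒫₂(𝐯)` is a
`Γ`-admissible pair partition (encoded by a fixed-point-free involution `f` of `Fin n` with
`v (f k) = v k`; admissibility: whenever `k < l < f k < f l` the letters `v k, v l` are
adjacent), and `(i₁,…,iₙ)` is a tuple of indices of class `𝒱`, then
`φ(b_{i₁,v₁} ⋯ b_{iₙ,vₙ}) = 1`. -/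
theorem stmt_5 {V : Type*} [DecidableEq V] (Γ : SimpleGraph V)
    {A : Type*} [Ring A] [Algebra ℂ A] [StarRing A] [StarModule ℂ A]
    (φ : A →ₗ[ℂ] ℂ) (hφ1 : φ 1 = 1)
    (b : ℕ → V → A) (hsa : ∀ i w, star (b i w) = b i w)
    (h1 : ∀ (k : ℕ) (idx : Fin k → ℕ × V), Function.Injective idx →
        ∀ l : Fin k → ℕ,
          φ (List.ofFn fun j => b (idx j).1 (idx j).2 ^ l j).prod
            = ∏ j, φ (b (idx j).1 (idx j).2 ^ l j))
    (h2 : ∀ i w, φ (b i w) = 0) (h2' : ∀ i w, φ (b i w ^ 2) = 1)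
    (s : ℕ → V → ℕ → V → ℂ)
    (hs : ∀ i w j u, s i w j u = 1 ∨ s i w j u = -1)
    (hsadj : ∀ i w j u, Γ.Adj w u → s i w j u = 1)
    (h3 : ∀ i w j u, b i w * b j u = s i w j u • (b j u * b i w))
    {n r : ℕ} (hn : n = 2 * r) (v : Fin n → V)
    (f : Fin n → Fin n) (hinv : Function.Involutive f)
    (hfix : ∀ k, f k ≠ k) (hlet : ∀ k, v (f k) = v k)
    (hadm : ∀ k l : Fin n, k < l → l < f k → f k < f l → Γ.Adj (v k) (v l))
    (i : Fin n → ℕ)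
    (hclass : ∀ k l, (i k = i l ∧ v k = v l) ↔ (k = l ∨ f k = l)) :
    φ (List.ofFn fun k => b (i k) (v k)).prod = 1 := by
  exact stmt_5_general φ (fun p : ℕ × V => b p.1 p.2) (fun k idx hidx => h1 k idx hidx fun _ => 2)
    (fun p => h2' p.1 p.2) (fun p q => s p.1 p.2 q.1 q.2)
    (fun _ _ => sq_eq_one_iff.2 (hs _ _ _ _)) (fun _ _ => h3 _ _ _ _) (fun k => (i k, v k)) f hfix
    (fun k l hkl hlk hfkl => hsadj _ _ _ _ (hadm k l hkl hlk hfkl))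
    fun k l => Prod.mk_inj.trans (hclass k l)
end

section
/- Let 𝐯 = v₁…vₙ be a word over VΓ with n = 2r even, let 𝒱 = {(e₁,z₁),…,(e_r,z_r)} ∈ 𝒫₂(𝐯) be any pair partition, and let (i₁,…,iₙ) be a tuple of indices of class 𝒱. Then φ(b_{i₁,v₁} b_{i₂,v₂} ⋯ b_{iₙ,vₙ}) = ∏_{(a,b) ∈ I_Γ(𝒱)} s(i_{e_a}, v_{e_a}, i_{e_b}, v_{e_b}). -/
/-!
Let `opener f k` be the smaller element of the pair `{k, f k}`. Stably sorting the letters of the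
word by their openers brings the two letters of each pair together, so the word equals, up to a
sign, a product of squares of distinct elements, on which `φ` takes the value `1`. The sign is a
product over the inversions of this sort, i.e. the positions `k < l` with `f l < k` and
`f l < f k`. For given `l`, a pair `{k, f k}` nested inside `{f l, l}` contributes the same sign
twice and cancels, while a pair leaving it to the right contributes exactly once: what remains is
the product over the crossings. The cancellation requires the signs to be symmetric, which follows
by evaluating `φ` on `b x ^ 2 * b y ^ 2` after exchanging the two inner letters twice.
-/

section Reordering

variable {α M A : Type*} [CommMonoid M] [Monoid A] [MulAction M A] [IsScalarTower M A A]
  [SMulCommClass M A A] (r : α → α → Prop) [DecidableRel r]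
  {g : α → A} {σ : α → α → M}

theorem mul_prod_map_eq_smul_orderedInsert [IsTrans α r]
    (hg : ∀ a c, g a * g c = σ a c • (g c * g a)) (a : α) {l : List α} (hl : l.Pairwise r) :
    g a * (l.map g).prod = (l.map fun c => if r a c then 1 else σ a c).prod •
      ((l.orderedInsert r a).map g).prod := by
  induction l with
  | nil => simp
  | cons c l ih =>
    rw [List.pairwise_cons] at hl
    by_cases hac : r a c
    · have no_sign : ∀ d ∈ c :: l, (if r a d then 1 else σ a d) = 1 := by
        intro d hd
        obtain rfl | hd := List.mem_cons.1 hd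
        · exact if_pos hac
        · exact if_pos (_root_.trans hac (hl.1 d hd))
      rw [List.orderedInsert_cons_of_le r l hac, List.map_congr_left no_sign]
      simp
    · rw [List.orderedInsert_of_not_le r l hac]
      simp only [List.map_cons, List.prod_cons, if_neg hac]
      rw [← mul_assoc, hg, smul_mul_assoc, mul_assoc, ih hl.2, mul_smul_comm, smul_smul]

theorem prod_map_ofFn_eq_smul_insertionSort [IsTrans α r] [Std.Total r]
    (hg : ∀ a c, g a * g c = σ a c • (g c * g a)) {n : ℕ} (x : Fin n → α) :
    ((List.ofFn x).map g).prod =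
      (∏ i, ∏ j ∈ Finset.Ioi i, if r (x i) (x j) then 1 else σ (x i) (x j)) •
        (((List.ofFn x).insertionSort r).map g).prod := by
  induction n with
  | zero => simp
  | succ n ih =>
    let tail := List.ofFn fun j : Fin n => x j.succ
    let sign (c : α) : M := if r (x 0) c then 1 else σ (x 0) c
    have sign_sort : ((tail.insertionSort r).map sign).prod = ∏ j : Fin n, sign (x j.succ) := by
      rw [((List.perm_insertionSort r tail).map sign).prod_eq, List.map_ofFn, List.prod_ofFn]
      rfl
    simp only [List.ofFn_succ, List.map_cons, List.prod_cons, List.insertionSort_cons,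
      Fin.prod_univ_succ, Fin.prod_Ioi_zero, Fin.prod_Ioi_succ]
    rw [ih, mul_smul_comm, mul_prod_map_eq_smul_orderedInsert r hg _
      (List.pairwise_insertionSort r _), smul_smul, mul_comm, sign_sort]

end Reordering

section Crossings

variable {α : Type*} [LinearOrder α]

/-- The first endpoint of the chord `{k, f k}` through `k`, for a pair partition encoded by the
fixed-point-free involution `f`. -/
def opener (f : α → α) (k : α) : α := min k (f k)

/-- The crossing pairs of chords of the involution `f`, each represented by the pair `(k, l)` of
first endpoints of the two chords. -/
def crossings [Fintype α] (f : α → α) : Finset (α × α) :=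
  {p | p.1 < p.2 ∧ p.2 < f p.1 ∧ f p.1 < f p.2}

variable {f : α → α}

theorem apply_opener {β : Type*} {w : α → β} (hw : ∀ k, w (f k) = w k) (k : α) :
    w (opener f k) = w k := by
  rcases min_choice k (f k) with h | h <;> simp [opener, h, hw]

theorem opener_lt_opener_iff {k l : α} (hkl : k < l) :
    opener f l < opener f k ↔ f l < k ∧ f l < f k := by
  grind [opener]

variable [Fintype α] {M : Type*} [CommMonoid M] {σ : α → α → M}

theorem prod_nested_eq_one (hinv : Function.Involutive f) (hfix : ∀ k, f k ≠ k)
    (hσ : ∀ k l, σ (f k) l = σ k l) (hsq : ∀ k l, σ k l * σ k l = 1) :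
    ∏ p : α × α with (f p.2 < p.1 ∧ p.1 < p.2) ∧ (f p.2 < f p.1 ∧ f p.1 < p.2), σ p.1 p.2 = 1 := by
  refine Finset.prod_involution (fun p _ => (f p.1, p.2)) ?_ ?_ ?_ ?_
  · simp [hσ, hsq]
  · exact fun p _ _ h => hfix p.1 (congrArg Prod.fst h)
  · simp +contextual [hinv _]
  · simp [hinv _]

theorem prod_linked_eq_prod_crossings (hinv : Function.Involutive f)
    (hσ : ∀ k l, σ (f k) l = σ k l) (hcomm : ∀ k l, σ k l = σ l k) :
    ∏ p : α × α with f p.2 < p.1 ∧ p.1 < p.2 ∧ p.2 < f p.1, σ p.1 p.2 =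
      ∏ p ∈ crossings f, σ p.1 p.2 := by
  refine Finset.prod_nbij' (fun p => (f p.2, p.1)) (fun p => (p.2, f p.1)) ?_ ?_ ?_ ?_ ?_
  · simp +contextual [crossings, hinv _]
  · simp +contextual [crossings, hinv _]
  · simp [hinv _]
  · simp [hinv _]
  · simp [hσ, hcomm]

theorem prod_inversions_opener_eq_prod_crossings (hinv : Function.Involutive f)
    (hfix : ∀ k, f k ≠ k) (hσ : ∀ k l, σ (f k) l = σ k l) (hcomm : ∀ k l, σ k l = σ l k)
    (hsq : ∀ k l, σ k l * σ k l = 1) :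
    ∏ p : α × α with p.1 < p.2 ∧ opener f p.2 < opener f p.1, σ p.1 p.2 =
      ∏ p ∈ crossings f, σ p.1 p.2 := by
  rw [← Finset.prod_filter_mul_prod_filter_not _ (fun p => p.2 < f p.1), Finset.filter_filter,
    Finset.filter_filter, ← prod_linked_eq_prod_crossings hinv hσ hcomm]
  refine (congrArg₂ (· * ·) ?_ ?_).trans (mul_one _)
  · refine Finset.prod_congr (Finset.filter_congr fun p _ => ?_) fun _ _ => rfl
    grind [opener_lt_opener_iff]
  · rw [← prod_nested_eq_one hinv hfix hσ hsq]
    refine Finset.prod_congr (Finset.filter_congr fun p _ => ?_) fun _ _ => rfl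
    have partner_ne : f p.2 < p.1 → f p.1 ≠ p.2 := fun hp h => by simp [← h, hinv p.1] at hp
    grind [opener_lt_opener_iff]

end Crossings

section SortedOpeners

variable {n : ℕ} {f : Fin n → Fin n}

/-- The first endpoints of the chords of the involution `f`, in increasing order. -/
def openers (f : Fin n → Fin n) : List (Fin n) := (List.finRange n).filter fun k => k < f k

theorem nodup_openers : (openers f).Nodup := (List.nodup_finRange n).filter _

theorem mem_openers {k : Fin n} : k ∈ openers f ↔ k < f k := by simp [openers]

theorem nodup_map_openers {ι : Type*} (hinv : Function.Involutive f) {w : Fin n → ι}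
    (hw : ∀ k l, w k = w l ↔ k = l ∨ f k = l) : ((openers f).map w).Nodup := by
  refine List.Nodup.map_on (fun k hk l hl hkl => ?_) nodup_openers
  refine ((hw k l).1 hkl).resolve_right ?_
  rintro rfl
  rw [mem_openers, hinv k] at hl
  exact hl.not_gt (mem_openers.1 hk)

theorem opener_eq_self {k : Fin n} (hk : k ∈ openers f) : opener f k = k :=
  min_eq_left (mem_openers.1 hk).le

theorem opener_apply (hinv : Function.Involutive f) (k : Fin n) : opener f (f k) = opener f k := by
  rw [opener, opener, hinv, min_comm]

theorem finRange_perm_openers_append (hinv : Function.Involutive f) (hfix : ∀ k, f k ≠ k) :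
    (List.finRange n).Perm (openers f ++ (openers f).map f) := by
  have disjoint : (openers f).Disjoint ((openers f).map f) := by
    intro k hk hfk
    obtain ⟨l, hl, rfl⟩ := List.mem_map.1 hfk
    rw [mem_openers, hinv l] at hk
    exact hk.not_gt (mem_openers.1 hl)
  have nodup := nodup_openers.append (nodup_openers.map hinv.injective) disjoint
  rw [List.perm_ext_iff_of_nodup (List.nodup_finRange n) nodup]
  intro k
  simp only [List.mem_finRange, List.mem_append, true_iff]
  rcases (hfix k).lt_or_gt with h | h
  · exact .inr <| List.mem_map.2 ⟨f k, mem_openers.2 (by rwa [hinv k]), hinv k⟩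
  · exact .inl (mem_openers.2 h)

theorem ofFn_opener_perm (hinv : Function.Involutive f) (hfix : ∀ k, f k ≠ k) :
    (List.ofFn (opener f)).Perm ((openers f).flatMap fun k => [k, k]) := by
  have map_openers : (openers f).map (opener f) = openers f :=
    (List.map_congr_left fun _ => opener_eq_self).trans (List.map_id' _)
  have map_closers : ((openers f).map f).map (opener f) = openers f := by
    simp only [List.map_map, Function.comp_def, opener_apply hinv, map_openers]
  rw [List.ofFn_eq_map]
  refine ((finRange_perm_openers_append hinv hfix).map _).trans ?_
  rw [List.map_append, map_openers, map_closers]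
  simpa using List.flatMap_append_perm (openers f) (fun k => [k]) (fun k => [k])

theorem insertionSort_ofFn_opener (hinv : Function.Involutive f) (hfix : ∀ k, f k ≠ k) :
    (List.ofFn (opener f)).insertionSort (· ≤ ·) = (openers f).flatMap fun k => [k, k] := by
  have sorted : ((openers f).flatMap fun k => [k, k]).SortedLE := by
    rw [List.sortedLE_iff_pairwise, List.pairwise_flatMap]
    exact ⟨by simp, ((List.sortedLT_finRange n).pairwise.filter _).imp fun h => by simpa using h.le⟩
  exact ((List.perm_insertionSort _ _).trans (ofFn_opener_perm hinv hfix)).eq_of_sortedLE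
    List.sortedLE_insertionSort sorted

end SortedOpeners

theorem prod_map_flatMap_pair {α A : Type*} [Monoid A] (g : α → A) (l : List α) :
    ((l.flatMap fun k => [k, k]).map g).prod = (l.map fun k => g k ^ 2).prod := by
  simp [List.flatMap_def, pow_two, Function.comp_def]

theorem prod_ofFn_eq_prod_crossings_smul {M A : Type*} [CommMonoid M] [Monoid A] [MulAction M A]
    [IsScalarTower M A A] [SMulCommClass M A A] {n : ℕ} {f : Fin n → Fin n}
    (hinv : Function.Involutive f) (hfix : ∀ k, f k ≠ k) {g : Fin n → A} (hgf : ∀ k, g (f k) = g k)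
    {σ : Fin n → Fin n → M} (hg : ∀ k l, g k * g l = σ k l • (g l * g k))
    (hσ : ∀ k l, σ (f k) l = σ k l) (hcomm : ∀ k l, σ k l = σ l k)
    (hsq : ∀ k l, σ k l * σ k l = 1) :
    (List.ofFn g).prod = (∏ p ∈ crossings f, σ p.1 p.2) •
      ((openers f).map fun k => g k ^ 2).prod := by
  have word : List.ofFn g = (List.ofFn (opener f)).map g := by
    simp [List.map_ofFn, Function.comp_def, apply_opener hgf]
  have hσ' (k l) : σ (opener f k) (opener f l) = σ k l := by
    rw [apply_opener (w := (σ · _)) (hσ · _), hcomm, apply_opener (w := (σ · _)) (hσ · _), hcomm]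
  have sign : (∏ k, ∏ l ∈ Finset.Ioi k, if opener f k ≤ opener f l then 1 else σ k l) =
      ∏ p ∈ crossings f, σ p.1 p.2 := by
    rw [← prod_inversions_opener_eq_prod_crossings hinv hfix hσ hcomm hsq]
    simp only [Finset.prod_filter, Fintype.prod_prod_type, ← Finset.filter_lt_eq_Ioi,
      ite_and, ← not_lt, ite_not]
  rw [word, prod_map_ofFn_eq_smul_insertionSort (· ≤ ·) hg, insertionSort_ofFn_opener hinv hfix,
    prod_map_flatMap_pair]
  simp only [hσ', sign]

theorem mul_eq_one_of_map_sq_mul_sq_eq_one {R A : Type*} [CommSemiring R] [Semiring A] [Algebra R A]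
    (φ : A →ₗ[R] R) {x y : A} {s t : R} (hxy : x * y = s • (y * x)) (hyx : y * x = t • (x * y))
    (hφ : φ (x ^ 2 * y ^ 2) = 1) : s * t = 1 := by
  have insert_swaps : x ^ 2 * y ^ 2 = (s * t) • (x ^ 2 * y ^ 2) := calc
    x ^ 2 * y ^ 2 = x * (x * y) * y := by simp only [pow_two, mul_assoc]
    _ = x * ((s * t) • (x * y)) * y := by rw [← smul_smul, ← hyx, ← hxy]
    _ = (s * t) • (x ^ 2 * y ^ 2) := by
      simp only [pow_two, mul_assoc, mul_smul_comm, smul_mul_assoc]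
  calc s * t = φ ((s * t) • (x ^ 2 * y ^ 2)) := by rw [map_smul, hφ, smul_eq_mul, mul_one]
    _ = 1 := by rw [← insert_swaps, hφ]

theorem sign_comm_of_map_sq_mul_sq_eq_one {R A ι : Type*} [CommSemiring R] [Semiring A]
    [Algebra R A] (φ : A →ₗ[R] R) {b : ι → A} (hφ : ∀ x y, x ≠ y → φ (b x ^ 2 * b y ^ 2) = 1)
    {s : ι → ι → R} (hs : ∀ x y, s x y * s x y = 1)
    (hb : ∀ x y, b x * b y = s x y • (b y * b x)) (x y : ι) : s x y = s y x := by
  rcases eq_or_ne x y with rfl | hxy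
  · rfl
  · have hst : s x y * s y x = 1 :=
      mul_eq_one_of_map_sq_mul_sq_eq_one φ (hb x y) (hb y x) (hφ x y hxy)
    rw [← mul_one (s x y), ← hs y x, ← mul_assoc, hst, one_mul]

theorem stmt_6_general {R A ι : Type*} [CommSemiring R] [Semiring A] [Algebra R A]
    (φ : A →ₗ[R] R) (b : ι → A)
    (hφ : ∀ l : List ι, l.Nodup → φ (l.map fun x => b x ^ 2).prod = 1)
    (s : ι → ι → R) (hs : ∀ x y, s x y * s x y = 1)
    (hb : ∀ x y, b x * b y = s x y • (b y * b x))
    (adj : ι → ι → Prop) [DecidableRel adj] (hadj : ∀ x y, adj x y → s x y = 1)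
    {n : ℕ} (w : Fin n → ι) (f : Fin n → Fin n) (hinv : Function.Involutive f)
    (hfix : ∀ k, f k ≠ k) (hclass : ∀ k l, w k = w l ↔ k = l ∨ f k = l) :
    φ (List.ofFn fun k => b (w k)).prod =
      ∏ kl : Fin n × Fin n with
        kl.1 < kl.2 ∧ kl.2 < f kl.1 ∧ f kl.1 < f kl.2 ∧ ¬ adj (w kl.1) (w kl.2),
        s (w kl.1) (w kl.2) := by
  have hwf (k) : w (f k) = w k := ((hclass k (f k)).2 (.inr rfl)).symm
  have s_comm := sign_comm_of_map_sq_mul_sq_eq_one φ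
    (fun x y hxy => by simpa using hφ [x, y] (by simpa using hxy)) hs hb
  have map_squares : φ ((openers f).map fun k => b (w k) ^ 2).prod = 1 := by
    simpa only [List.map_map, Function.comp_def] using hφ _ (nodup_map_openers hinv hclass)
  rw [prod_ofFn_eq_prod_crossings_smul hinv hfix (σ := fun k l => s (w k) (w l))
    (fun k => by rw [hwf]) (fun _ _ => hb _ _) (fun k l => by rw [hwf]) (fun _ _ => s_comm _ _)
    (fun _ _ => hs _ _), map_smul, map_squares, smul_eq_mul, mul_one,
    ← Finset.prod_filter_of_ne fun _ _ => mt (hadj _ _), crossings, Finset.filter_filter]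
  simp only [and_assoc]

/-- In the setting of a unital complex `*`-algebra `A`, a unital linear
functional `φ`, self-adjoint elements `b i v` satisfying properties (1)–(3): if
`𝐯 = v₁…vₙ` is a word with `n = 2r` even, `𝒱 ∈ 𝒫₂(𝐯)` is any pair partition (encoded by a
fixed-point-free involution `f` of `Fin n` with `v (f k) = v k`; the pair of `k` is
`(k, f k)` with `k < f k`), and `(i₁,…,iₙ)` is a tuple of indices of class `𝒱`, then
`φ(b_{i₁,v₁} ⋯ b_{iₙ,vₙ}) = ∏_{(a,b) ∈ I_Γ(𝒱)} s(i_{e_a}, v_{e_a}, i_{e_b}, v_{e_b})`,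
where `I_Γ(𝒱)` consists of the crossings `k < l < f k < f l` with `v k, v l` non-adjacent. -/
theorem stmt_6 {V : Type*} [DecidableEq V] (Γ : SimpleGraph V) [DecidableRel Γ.Adj]
    {A : Type*} [Ring A] [Algebra ℂ A] [StarRing A] [StarModule ℂ A]
    (φ : A →ₗ[ℂ] ℂ) (hφ1 : φ 1 = 1)
    (b : ℕ → V → A) (hsa : ∀ i w, star (b i w) = b i w)
    (h1 : ∀ (k : ℕ) (idx : Fin k → ℕ × V), Function.Injective idx →
        ∀ l : Fin k → ℕ,
          φ (List.ofFn fun j => b (idx j).1 (idx j).2 ^ l j).prod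
            = ∏ j, φ (b (idx j).1 (idx j).2 ^ l j))
    (h2 : ∀ i w, φ (b i w) = 0) (h2' : ∀ i w, φ (b i w ^ 2) = 1)
    (s : ℕ → V → ℕ → V → ℂ)
    (hs : ∀ i w j u, s i w j u = 1 ∨ s i w j u = -1)
    (hsadj : ∀ i w j u, Γ.Adj w u → s i w j u = 1)
    (h3 : ∀ i w j u, b i w * b j u = s i w j u • (b j u * b i w))
    {n r : ℕ} (hn : n = 2 * r) (v : Fin n → V)
    (f : Fin n → Fin n) (hinv : Function.Involutive f)
    (hfix : ∀ k, f k ≠ k) (hlet : ∀ k, v (f k) = v k)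
    (i : Fin n → ℕ)
    (hclass : ∀ k l, (i k = i l ∧ v k = v l) ↔ (k = l ∨ f k = l)) :
    φ (List.ofFn fun k => b (i k) (v k)).prod
      = ∏ kl ∈ Finset.univ.filter (fun kl : Fin n × Fin n =>
            kl.1 < kl.2 ∧ kl.2 < f kl.1 ∧ f kl.1 < f kl.2 ∧ ¬ Γ.Adj (v kl.1) (v kl.2)),
          s (i kl.1) (v kl.1) (i kl.2) (v kl.2) := by
  exact stmt_6_general φ (fun x => b x.1 x.2)
    (fun l hl => by
      simpa [h2', ← List.ofFn_getElem_eq_map] using h1 l.length l.get hl.injective_get fun _ => 2)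
    (fun x y => s x.1 x.2 y.1 y.2)
    (fun x y => by rcases hs x.1 x.2 y.1 y.2 with h | h <;> simp [h])
    (fun _ _ => h3 _ _ _ _) (fun x y => Γ.Adj x.2 y.2) (fun _ _ h => hsadj _ _ _ _ h)
    (fun k => (i k, v k)) f hinv hfix (fun k l => Prod.ext_iff.trans (hclass k l))
end

section
/- The complex algebra 𝒜 is finite dimensional; more precisely, the images in 𝒜 of the ordered products x_A := ∏_{t∈A} x_t (the product taken in the fixed linear order), for A ranging over all subsets of S, form a ℂ-vector space basis of 𝒜, so that dim_ℂ 𝒜 = 2^{|S|}. -/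
/-- The defining relations of the algebra `𝒜`:
`x_t x_u = s(t,u) x_u x_t + 2 δ_{t,u} 1` for all `t, u ∈ S`. -/
inductive MixedCliffordRel {S : Type*} [DecidableEq S] (s : S → S → ℝ) :
    FreeAlgebra ℂ S → FreeAlgebra ℂ S → Prop
  | rel (t u : S) : MixedCliffordRel s
      (FreeAlgebra.ι ℂ t * FreeAlgebra.ι ℂ u)
      ((s t u : ℂ) • (FreeAlgebra.ι ℂ u * FreeAlgebra.ι ℂ t)
        + if t = u then (2 : FreeAlgebra ℂ S) else 0)

/-- `𝒜`: the quotient of the free `ℂ`-algebra on `S` by the two-sided ideal generated by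
the relations `x_t x_u − s(t,u) x_u x_t = 2 δ_{t,u}`. -/
abbrev MixedCliffordAlgebra {S : Type*} [DecidableEq S] (s : S → S → ℝ) :=
  RingQuot (MixedCliffordRel s)

/-- The image `x_t` in `𝒜` of a generator `t ∈ S`. -/
noncomputable def mixedCliffordGen {S : Type*} [DecidableEq S] (s : S → S → ℝ) (t : S) :
    MixedCliffordAlgebra s :=
  RingQuot.mkAlgHom ℂ (MixedCliffordRel s) (FreeAlgebra.ι ℂ t)

/-- For `A ⊆ S`, the ordered product `x_A := ∏_{t ∈ A} x_t`, the product taken in the fixed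
linear order of `S` (with `x_∅ = 1`). -/
noncomputable def mixedCliffordBasisElem {S : Type*} [LinearOrder S] (s : S → S → ℝ)
    (A : Finset S) : MixedCliffordAlgebra s :=
  ((A.sort (· ≤ ·)).map (mixedCliffordGen s)).prod

/-!
Moving `x_t` to its place in an ordered product `x_A` costs the sign `∏_{a ∈ A, a < t} s(t, a)`,
and two adjacent copies of `x_t` cancel; hence `x_t * x_A = ± x_{{t} ∆ A}` and the ordered products
span. Conversely, the right-hand side of this formula defines operators on the free module with
basis the finite subsets of `S`. They satisfy the defining relations, so the algebra acts on that
module, and `x_A` sends the basis vector of `∅` to the basis vector of `A`; hence the ordered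
products are linearly independent.
-/

open scoped symmDiff

/-- The factor `∏_{a ∈ A, a < t} s(t, a)` produced when `x_t`, standing to the left of the ordered
product `x_A`, is moved past the `x_a` with `a < t`. -/
def reorderSign {S M : Type*} [LinearOrder S] [CommMonoid M] (s : S → S → M) (t : S)
    (A : Finset S) : M :=
  ∏ a ∈ A with a < t, s t a

namespace reorderSign

variable {S M : Type*} [LinearOrder S] [CommMonoid M] (s : S → S → M) {t u : S} {A : Finset S}

lemma eq_one_of_forall_le (h : ∀ a ∈ A, t ≤ a) : reorderSign s t A = 1 := by
  rw [reorderSign, Finset.filter_false_of_mem fun a ha => (h a ha).not_gt, Finset.prod_empty]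

lemma insert_of_lt (hA : u ∉ A) (hut : u < t) :
    reorderSign s t (insert u A) = s t u * reorderSign s t A := by
  rw [reorderSign, Finset.filter_insert, if_pos hut, Finset.prod_insert (by simp [hA]),
    reorderSign]

lemma symmDiff_of_le (htu : t ≤ u) : reorderSign s t ({u} ∆ A) = reorderSign s t A := by
  have : ({u} ∆ A).filter (· < t) = A.filter (· < t) := by
    ext a
    grind [Finset.mem_symmDiff]
  rw [reorderSign, this, reorderSign]

lemma symmDiff_of_lt (hut : u < t) (hs : s t u * s t u = 1) :
    reorderSign s t ({u} ∆ A) = s t u * reorderSign s t A := by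
  by_cases hA : u ∈ A
  · have h_erase : {u} ∆ A = A.erase u := by
      grind [Finset.mem_symmDiff]
    have h_insert := insert_of_lt s (Finset.notMem_erase u A) hut
    rw [Finset.insert_erase hA] at h_insert
    rw [h_erase, h_insert, ← mul_assoc, hs, one_mul]
  · have h_insert : {u} ∆ A = insert u A := by
      grind [Finset.mem_symmDiff]
    rw [h_insert, insert_of_lt s hA hut]

lemma mul_self (hs : ∀ u, s t u * s t u = 1) : reorderSign s t A * reorderSign s t A = 1 := by
  rw [reorderSign, ← Finset.prod_mul_distrib]
  exact Finset.prod_eq_one fun a _ => hs a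

end reorderSign

/-- The operator on the free module with basis the finite subsets of `S` which sends the basis
vector of `A` to `reorderSign s t A` times that of `{t} ∆ A`: the model of left multiplication by
`x_t` in the basis of ordered products. -/
noncomputable def toggleOp {S R : Type*} [LinearOrder S] [CommSemiring R] (s : S → S → R) (t : S) :
    Module.End R (Finset S →₀ R) :=
  Finsupp.linearCombination R fun A => Finsupp.single ({t} ∆ A) (reorderSign s t A)

namespace toggleOp

section CommSemiring

variable {S R : Type*} [LinearOrder S] [CommSemiring R] (s : S → S → R) {t u : S}

lemma apply_single (t : S) (A : Finset S) (c : R) :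
    toggleOp s t (Finsupp.single A c) = Finsupp.single ({t} ∆ A) (c * reorderSign s t A) := by
  rw [toggleOp, Finsupp.linearCombination_single, Finsupp.smul_single, smul_eq_mul]

lemma apply_single_of_forall_lt {A : Finset S} (h : ∀ a ∈ A, t < a) (c : R) :
    toggleOp s t (Finsupp.single A c) = Finsupp.single (insert t A) c := by
  have h_insert : {t} ∆ A = insert t A := by
    grind [Finset.mem_symmDiff]
  rw [apply_single, reorderSign.eq_one_of_forall_le s fun a ha => (h a ha).le, mul_one, h_insert]

lemma mul_self (hs : ∀ u, s t u * s t u = 1) : toggleOp s t * toggleOp s t = 1 := by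
  refine Finsupp.lhom_ext fun A c => ?_
  rw [Module.End.mul_apply, apply_single, apply_single, reorderSign.symmDiff_of_le s le_rfl,
    mul_assoc, reorderSign.mul_self s hs, mul_one, symmDiff_symmDiff_cancel_left,
    Module.End.one_apply]

lemma mul_of_lt (hut : u < t) (hs : s t u * s t u = 1) :
    toggleOp s t * toggleOp s u = s t u • (toggleOp s u * toggleOp s t) := by
  refine Finsupp.lhom_ext fun A c => ?_
  simp only [Module.End.mul_apply, LinearMap.smul_apply, apply_single, Finsupp.smul_single,
    smul_eq_mul, reorderSign.symmDiff_of_le s hut.le, reorderSign.symmDiff_of_lt s hut hs]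
  rw [symmDiff_left_comm]
  congr 1
  ring

lemma mul_of_ne (hsym : s t u = s u t) (hs : s t u * s t u = 1) (htu : t ≠ u) :
    toggleOp s t * toggleOp s u = s t u • (toggleOp s u * toggleOp s t) := by
  rcases htu.lt_or_gt with h | h
  · rw [mul_of_lt s h (hsym ▸ hs), smul_smul, ← hsym, hs, one_smul]
  · exact mul_of_lt s h hs

end CommSemiring

lemma mul_eq_smul_add {S R : Type*} [LinearOrder S] [CommRing R] (s : S → S → R)
    (hsym : ∀ t u, s t u = s u t) (hs : ∀ t u, s t u * s t u = 1) (hdiag : ∀ t, s t t = -1)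
    (t u : S) :
    toggleOp s t * toggleOp s u =
      s t u • (toggleOp s u * toggleOp s t) + if t = u then 2 else 0 := by
  rcases eq_or_ne t u with rfl | htu
  · rw [mul_self s (hs t), hdiag, if_pos rfl, ← one_add_one_eq_two]
    module
  · rw [if_neg htu, add_zero, mul_of_ne s (hsym t u) (hs t u) htu]

end toggleOp

lemma submodule_eq_top_of_adjoin_eq_top {R A : Type*} [CommSemiring R] [Semiring A] [Algebra R A]
    {X : Set A} (hX : Algebra.adjoin R X = ⊤) {M : Submodule R A} (one_mem : 1 ∈ M)
    (mul_mem : ∀ x ∈ X, ∀ m ∈ M, x * m ∈ M) : M = ⊤ := by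
  rw [eq_top_iff, ← Algebra.top_toSubmodule, ← hX, Algebra.adjoin_eq_span, Submodule.span_le]
  intro y hy
  induction hy using Submonoid.closure_induction_left with
  | one => exact one_mem
  | mul_left x hx m _ hm => exact mul_mem x hx m hm

namespace MixedCliffordAlgebra

section Generators

variable {S : Type*} [DecidableEq S] (s : S → S → ℝ)

lemma gen_mul_gen (t u : S) :
    mixedCliffordGen s t * mixedCliffordGen s u =
      (s t u : ℂ) • (mixedCliffordGen s u * mixedCliffordGen s t) + if t = u then 2 else 0 := by
  simpa only [mixedCliffordGen, map_mul, map_add, map_smul,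
    apply_ite (RingQuot.mkAlgHom ℂ (MixedCliffordRel s)), map_ofNat, map_zero] using
    RingQuot.mkAlgHom_rel ℂ (MixedCliffordRel.rel (s := s) t u)

lemma gen_mul_gen_of_ne {t u : S} (htu : t ≠ u) :
    mixedCliffordGen s t * mixedCliffordGen s u =
      (s t u : ℂ) • (mixedCliffordGen s u * mixedCliffordGen s t) := by
  rw [gen_mul_gen, if_neg htu, add_zero]

lemma gen_mul_self {t : S} (ht : s t t = -1) : mixedCliffordGen s t * mixedCliffordGen s t = 1 := by
  have h := gen_mul_gen s t t
  rw [ht, if_pos rfl, Complex.ofReal_neg, Complex.ofReal_one, ← one_add_one_eq_two] at h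
  linear_combination (norm := module) (1 / 2 : ℂ) • h

lemma adjoin_range_gen : Algebra.adjoin ℂ (Set.range (mixedCliffordGen s)) = ⊤ := by
  have h_range : Set.range (mixedCliffordGen s) =
      RingQuot.mkAlgHom ℂ (MixedCliffordRel s) '' Set.range (FreeAlgebra.ι ℂ) :=
    Set.range_comp _ _
  rw [h_range, ← AlgHom.map_adjoin, FreeAlgebra.adjoin_range_ι, Algebra.map_top,
    AlgHom.range_eq_top]
  exact RingQuot.mkAlgHom_surjective ℂ _

/-- The universal property of the mixed Clifford algebra: a family in a `ℂ`-algebra which satisfies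
the defining relations extends to an algebra homomorphism. -/
noncomputable def lift {B : Type*} [Ring B] [Algebra ℂ B] (f : S → B)
    (hf : ∀ t u, f t * f u = (s t u : ℂ) • (f u * f t) + if t = u then 2 else 0) :
    MixedCliffordAlgebra s →ₐ[ℂ] B :=
  RingQuot.liftAlgHom ℂ ⟨FreeAlgebra.lift ℂ f, by
    rintro _ _ ⟨t, u⟩
    simp only [map_mul, map_add, map_smul, FreeAlgebra.lift_ι_apply,
      apply_ite (FreeAlgebra.lift ℂ f), map_ofNat, map_zero, hf t u]⟩

lemma lift_gen {B : Type*} [Ring B] [Algebra ℂ B] (f : S → B)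
    (hf : ∀ t u, f t * f u = (s t u : ℂ) • (f u * f t) + if t = u then 2 else 0) (t : S) :
    lift s f hf (mixedCliffordGen s t) = f t := by
  rw [lift, mixedCliffordGen, RingQuot.liftAlgHom_mkAlgHom_apply, FreeAlgebra.lift_ι_apply]

end Generators

section OrderedProducts

variable {S : Type*} [LinearOrder S] (s : S → S → ℝ)

lemma basisElem_empty : mixedCliffordBasisElem s ∅ = 1 := by
  rw [mixedCliffordBasisElem, Finset.sort_empty, List.map_nil, List.prod_nil]

lemma basisElem_insert_of_forall_lt {t : S} {A : Finset S} (h : ∀ a ∈ A, t < a) :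
    mixedCliffordBasisElem s (insert t A) = mixedCliffordGen s t * mixedCliffordBasisElem s A := by
  rw [mixedCliffordBasisElem,
    Finset.sort_insert (r := (· ≤ ·)) (fun a ha => (h a ha).le) fun ht => (h t ht).false,
    List.map_cons, List.prod_cons, mixedCliffordBasisElem]

lemma gen_mul_basisElem {t : S} (ht : s t t = -1) (A : Finset S) :
    mixedCliffordGen s t * mixedCliffordBasisElem s A =
      ((reorderSign s t A : ℝ) : ℂ) • mixedCliffordBasisElem s ({t} ∆ A) := by
  induction A using Finset.induction_on_min with
  | empty =>
    have h_singleton : {t} ∆ ∅ = insert t (∅ : Finset S) := symmDiff_bot _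
    rw [reorderSign.eq_one_of_forall_le s (by simp), Complex.ofReal_one, one_smul, h_singleton,
      basisElem_insert_of_forall_lt s (by simp)]
  | insert a A haA ih =>
    have ha : a ∉ A := fun ha => (haA a ha).false
    rcases lt_trichotomy t a with hta | rfl | hat
    · have h_lt : ∀ b ∈ insert a A, t < b := by grind
      have h_insert : {t} ∆ insert a A = insert t (insert a A) := by
        grind [Finset.mem_symmDiff]
      rw [reorderSign.eq_one_of_forall_le s fun b hb => (h_lt b hb).le, Complex.ofReal_one,
        one_smul, h_insert, basisElem_insert_of_forall_lt s h_lt]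
    · have h_le : ∀ b ∈ insert t A, t ≤ b := by grind
      have h_cancel : {t} ∆ insert t A = A := by
        grind [Finset.mem_symmDiff]
      rw [reorderSign.eq_one_of_forall_le s h_le, Complex.ofReal_one, one_smul, h_cancel,
        basisElem_insert_of_forall_lt s haA, ← mul_assoc, gen_mul_self s ht, one_mul]
    · have h_lt : ∀ b ∈ {t} ∆ A, a < b := by
        grind [Finset.mem_symmDiff]
      have h_insert : {t} ∆ insert a A = insert a ({t} ∆ A) := by
        grind [Finset.mem_symmDiff]
      rw [basisElem_insert_of_forall_lt s haA, ← mul_assoc, gen_mul_gen_of_ne s hat.ne',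
        smul_mul_assoc, mul_assoc, ih, mul_smul_comm, smul_smul, h_insert,
        basisElem_insert_of_forall_lt s h_lt, reorderSign.insert_of_lt s ha hat,
        Complex.ofReal_mul]

lemma span_range_basisElem (hdiag : ∀ t, s t t = -1) :
    Submodule.span ℂ (Set.range fun A : Finset S => mixedCliffordBasisElem s A) = ⊤ := by
  refine submodule_eq_top_of_adjoin_eq_top (adjoin_range_gen s)
    (Submodule.subset_span ⟨∅, basisElem_empty s⟩) ?_
  rintro _ ⟨t, rfl⟩ m hm
  induction hm using Submodule.span_induction with
  | mem _ hA =>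
    obtain ⟨A, rfl⟩ := hA
    simp only [gen_mul_basisElem s (hdiag t)]
    exact Submodule.smul_mem _ _ (Submodule.subset_span ⟨_, rfl⟩)
  | zero => rw [mul_zero]; exact Submodule.zero_mem _
  | add x y _ _ hx hy => rw [mul_add]; exact Submodule.add_mem _ hx hy
  | smul c x _ hx => rw [mul_smul_comm]; exact Submodule.smul_mem _ c hx

section Representation

variable (hsym : ∀ t u, s t u = s u t) (hs : ∀ t u, s t u * s t u = 1) (hdiag : ∀ t, s t t = -1)

/-- The representation of the mixed Clifford algebra on the free module with basis the finite
subsets of `S` in which `x_t` acts by `toggleOp`; a posteriori, it is the left regular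
representation in the basis of ordered products. -/
noncomputable def toggleRep : MixedCliffordAlgebra s →ₐ[ℂ] Module.End ℂ (Finset S →₀ ℂ) :=
  lift s (toggleOp fun t u => (s t u : ℂ)) <|
    toggleOp.mul_eq_smul_add _ (fun t u => congrArg _ (hsym t u))
      (fun t u => by rw [← Complex.ofReal_mul, hs, Complex.ofReal_one])
      (fun t => by rw [hdiag, Complex.ofReal_neg, Complex.ofReal_one])

lemma toggleRep_basisElem_single_empty (A : Finset S) :
    toggleRep s hsym hs hdiag (mixedCliffordBasisElem s A) (Finsupp.single ∅ 1) =
      Finsupp.single A 1 := by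
  induction A using Finset.induction_on_min with
  | empty => rw [basisElem_empty, map_one, Module.End.one_apply]
  | insert a A haA ih =>
    rw [basisElem_insert_of_forall_lt s haA, map_mul, Module.End.mul_apply, ih, toggleRep, lift_gen,
      toggleOp.apply_single_of_forall_lt _ haA]

include hsym hs hdiag in
lemma linearIndependent_basisElem :
    LinearIndependent ℂ fun A : Finset S => mixedCliffordBasisElem s A := by
  let evalEmpty : MixedCliffordAlgebra s →ₗ[ℂ] Finset S →₀ ℂ :=
    LinearMap.applyₗ (Finsupp.single ∅ 1) ∘ₗ (toggleRep s hsym hs hdiag).toLinearMap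
  have h_eval : evalEmpty ∘ mixedCliffordBasisElem s = fun A => Finsupp.single A 1 :=
    funext (toggleRep_basisElem_single_empty s hsym hs hdiag)
  exact LinearIndependent.of_comp evalEmpty
    (h_eval ▸ Finsupp.linearIndependent_single_one ℂ (Finset S))

end Representation

end OrderedProducts

end MixedCliffordAlgebra

theorem stmt_12_general {S : Type*} [LinearOrder S] (s : S → S → ℝ)
    (hsym : ∀ t u, s t u = s u t) (hval : ∀ t u, s t u = 1 ∨ s t u = -1)
    (hdiag : ∀ t, s t t = -1) :
    LinearIndependent ℂ (fun A : Finset S => mixedCliffordBasisElem s A) ∧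
      Submodule.span ℂ (Set.range fun A : Finset S => mixedCliffordBasisElem s A) = ⊤ ∧
      Module.rank ℂ (MixedCliffordAlgebra s) = Cardinal.mk (Finset S) := by
  have hli := MixedCliffordAlgebra.linearIndependent_basisElem s hsym
    (fun t u => mul_self_eq_one_iff.mpr (hval t u)) hdiag
  have hspan := MixedCliffordAlgebra.span_range_basisElem s hdiag
  exact ⟨hli, hspan, (Module.Basis.mk hli hspan.ge).mk_eq_rank''.symm⟩

/-- Let `S` be a finite linearly ordered set and `s : S×S → {−1,1}` with
`s(t,u) = s(u,t)` and `s(t,t) = −1`.  The algebra `𝒜` is finite dimensional: the ordered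
products `x_A`, `A ⊆ S`, form a `ℂ`-vector space basis of `𝒜`, so `dim_ℂ 𝒜 = 2^{|S|}`. -/
theorem stmt_12 {S : Type*} [Fintype S] [LinearOrder S]
    (s : S → S → ℝ) (hsym : ∀ t u, s t u = s u t)
    (hval : ∀ t u, s t u = 1 ∨ s t u = -1) (hdiag : ∀ t, s t t = -1) :
    LinearIndependent ℂ (fun A : Finset S => mixedCliffordBasisElem s A) ∧
      Submodule.span ℂ (Set.range fun A : Finset S => mixedCliffordBasisElem s A) = ⊤ ∧
      Module.finrank ℂ (MixedCliffordAlgebra s) = 2 ^ Fintype.card S := by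
  obtain ⟨hli, hspan, hrank⟩ := stmt_12_general s hsym hval hdiag
  exact ⟨hli, hspan, Module.finrank_eq_of_rank_eq (by simpa using hrank)⟩
end

section
/- The linear functional φ : 𝒜 → ℂ determined by φ(x_A) = 1 if A = ∅ and φ(x_A) = 0 otherwise is a faithful tracial state on 𝒜: φ(1) = 1, φ(xy) = φ(yx) for all x, y ∈ 𝒜, and φ(x*x) ≥ 0 for all x ∈ 𝒜 with equality only for x = 0, where * is the unique antilinear antiautomorphism of 𝒜 with x_t* = x_t for all t ∈ S. Consequently ⟨x, y⟩ := φ(y*x) defines an inner product on 𝒜. -/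
open ComplexOrder

/-!
Two generators commute up to sign and square to `1`, so the ordered products satisfy
`x_A x_B = ± x_{A ∆ B}` and span the algebra. Hence `φ (x_A x_B) = 0` unless `A = B`, and a bilinear
form vanishing off the diagonal is symmetric: `φ` is tracial. Moreover `x_A* x_A = 1`, hence
`x_A* = ± x_A`, so the `x_A` are orthonormal for `(x, y) ↦ φ (x* y)`. Faithfulness follows, since
`φ (x* x) = ∑ |c_A|²` when `x = ∑ c_A x_A`.
-/

section Orthonormal

variable {𝕜 V ι : Type*} [RCLike 𝕜] [AddCommGroup V] [Module 𝕜 V] [DecidableEq ι]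
  {B : V →ₗ⋆[𝕜] V →ₗ[𝕜] 𝕜} {b : ι → V}

theorem apply_linearCombination_self_of_orthonormal
    (hB : ∀ i j, B (b i) (b j) = if i = j then 1 else 0) (c : ι →₀ 𝕜) :
    B (Finsupp.linearCombination 𝕜 b c) (Finsupp.linearCombination 𝕜 b c) =
      ((∑ i ∈ c.support, ‖c i‖ ^ 2 : ℝ) : 𝕜) := by
  rw [RCLike.ofReal_sum]
  simp only [Finsupp.linearCombination_apply, Finsupp.sum, map_sum, LinearMap.sum_apply,
    LinearMap.map_smulₛₗ, LinearMap.smul_apply, map_smul, hB, smul_eq_mul]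
  refine Finset.sum_congr rfl fun i hi => ?_
  rw [Finset.sum_eq_single_of_mem i hi fun j _ hj => by rw [if_neg hj, mul_zero], if_pos rfl,
    mul_one, RCLike.mul_conj, RCLike.ofReal_pow]

theorem apply_self_nonneg_of_orthonormal
    (hB : ∀ i j, B (b i) (b j) = if i = j then 1 else 0)
    (hb : Submodule.span 𝕜 (Set.range b) = ⊤) (x : V) : 0 ≤ B x x := by
  have hsurj : Function.Surjective (Finsupp.linearCombination 𝕜 b) :=
    LinearMap.range_eq_top.mp ((Finsupp.range_linearCombination 𝕜).trans hb)
  obtain ⟨c, rfl⟩ := hsurj x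
  rw [apply_linearCombination_self_of_orthonormal hB]
  exact_mod_cast Finset.sum_nonneg fun i _ => sq_nonneg ‖c i‖

theorem eq_zero_of_apply_self_eq_zero_of_orthonormal
    (hB : ∀ i j, B (b i) (b j) = if i = j then 1 else 0)
    (hb : Submodule.span 𝕜 (Set.range b) = ⊤) {x : V} (hx : B x x = 0) : x = 0 := by
  have hsurj : Function.Surjective (Finsupp.linearCombination 𝕜 b) :=
    LinearMap.range_eq_top.mp ((Finsupp.range_linearCombination 𝕜).trans hb)
  obtain ⟨c, rfl⟩ := hsurj x
  rw [apply_linearCombination_self_of_orthonormal hB, RCLike.ofReal_eq_zero,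
    Finset.sum_eq_zero_iff_of_nonneg fun i _ => sq_nonneg ‖c i‖] at hx
  have hc : c = 0 := by
    ext i
    by_contra hi
    exact hi (by simpa using hx i (Finsupp.mem_support_iff.mpr hi))
  rw [hc, map_zero]

end Orthonormal

/-- The product of the `g t` for `t ∈ A`, taken in increasing order of `t`: this is `x_A` for an
arbitrary family `g`. By definition, `mixedCliffordBasisElem s` is
`orderedProd (mixedCliffordGen s)`. -/
def orderedProd {ι M : Type*} [LinearOrder ι] [Monoid M] (g : ι → M) (A : Finset ι) : M :=
  ((A.sort (· ≤ ·)).map g).prod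

theorem orderedProd_empty {ι M : Type*} [LinearOrder ι] [Monoid M] (g : ι → M) :
    orderedProd g ∅ = 1 := by
  simp [orderedProd]

/-- A family of elements squaring to `1`, any two of which commute or anticommute. The sign is a
unit of `ℤ`, so that signs compose by multiplication. -/
structure IsMixedCliffordFamily {ι R : Type*} [Ring R] (g : ι → R) : Prop where
  mul_self (t : ι) : g t * g t = 1
  exists_mul_eq_smul_mul (t u : ι) : ∃ ε : ℤˣ, g t * g u = ε • (g u * g t)

/-- The sesquilinear form `(x, y) ↦ φ (x* y)` of a functional `φ`, where `σ` is the antilinear map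
`x ↦ x*`. It is antilinear in the first variable, so the inner product `⟨x, y⟩ = φ (y* x)` is
`starForm φ σ y x`. -/
def starForm {K R : Type*} [CommRing K] [StarRing K] [Ring R] [Algebra K R] (φ : R →ₗ[K] K)
    (σ : R →ₗ⋆[K] R) : R →ₗ⋆[K] R →ₗ[K] K :=
  ((LinearMap.mul K R).compr₂ φ).comp σ

theorem starForm_apply {K R : Type*} [CommRing K] [StarRing K] [Ring R] [Algebra K R]
    (φ : R →ₗ[K] K) (σ : R →ₗ⋆[K] R) (x y : R) : starForm φ σ x y = φ (σ x * y) :=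
  rfl

theorem exists_prod_map_eq_smul_of_perm {ι R : Type*} [Ring R] {g : ι → R}
    (hg : ∀ t u, ∃ ε : ℤˣ, g t * g u = ε • (g u * g t)) {l m : List ι} (h : l.Perm m) :
    ∃ ε : ℤˣ, (l.map g).prod = ε • (m.map g).prod := by
  induction h with
  | nil => exact ⟨1, (one_smul _ _).symm⟩
  | cons t _ ih =>
    obtain ⟨ε, hε⟩ := ih
    exact ⟨ε, by simp only [List.map_cons, List.prod_cons, hε, mul_smul_comm]⟩
  | swap t u l =>
    obtain ⟨ε, hε⟩ := hg u t
    exact ⟨ε, by simp only [List.map_cons, List.prod_cons, ← mul_assoc, hε, smul_mul_assoc]⟩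
  | trans _ _ ihl ihm =>
    obtain ⟨ε, hε⟩ := ihl
    obtain ⟨δ, hδ⟩ := ihm
    exact ⟨ε * δ, by rw [hε, hδ, mul_smul]⟩

theorem map_prod_map_mul_prod_map_eq_one {ι M : Type*} [Monoid M] {g : ι → M}
    (hg : ∀ t, g t * g t = 1) {σ : M → M} (hσ_one : σ 1 = 1)
    (hσ_mul : ∀ x y, σ (x * y) = σ y * σ x) (hσ : ∀ t, σ (g t) = g t) (l : List ι) :
    σ (l.map g).prod * (l.map g).prod = 1 := by
  induction l with
  | nil => simp [hσ_one]
  | cons t l ih =>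
    calc σ ((t :: l).map g).prod * ((t :: l).map g).prod
        = σ (l.map g).prod * (g t * g t) * (l.map g).prod := by
          simp only [List.map_cons, List.prod_cons, hσ_mul, hσ, mul_assoc]
      _ = 1 := by rw [hg, mul_one, ih]

theorem isMixedCliffordFamily_of_mul_eq {ι K R : Type*} [DecidableEq ι] [Field K] [NeZero (2 : K)]
    [Ring R] [Algebra K R] {g : ι → R} {s : ι → ι → K} (hval : ∀ t u, s t u = 1 ∨ s t u = -1)
    (hdiag : ∀ t, s t t = -1)
    (hrel : ∀ t u, g t * g u = s t u • (g u * g t) + if t = u then 2 else 0) :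
    IsMixedCliffordFamily g where
  mul_self t := by
    have hneg : g t * g t = -(g t * g t) + 2 := by simpa [hdiag] using hrel t t
    have htwo : (2 : K) • (g t * g t) = (2 : K) • 1 := by
      rw [two_smul, two_smul, one_add_one_eq_two]
      exact eq_neg_add_iff_add_eq.mp hneg
    exact (smul_right_inj two_ne_zero).mp htwo
  exists_mul_eq_smul_mul t u := by
    rcases eq_or_ne t u with rfl | htu
    · exact ⟨1, (one_smul _ _).symm⟩
    · rcases hval t u with hs | hs
      · exact ⟨1, by simpa [hs, htu] using hrel t u⟩
      · exact ⟨-1, by simpa [hs, htu] using hrel t u⟩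

namespace IsMixedCliffordFamily

variable {ι R : Type*} [LinearOrder ι] [Ring R] {g : ι → R}

theorem exists_orderedProd_insert (hg : IsMixedCliffordFamily g) {t : ι} {A : Finset ι}
    (ht : t ∉ A) : ∃ ε : ℤˣ, orderedProd g (insert t A) = ε • (g t * orderedProd g A) := by
  have hperm : ((insert t A).sort (· ≤ ·)).Perm (t :: A.sort (· ≤ ·)) := by
    rw [List.perm_ext_iff_of_nodup (Finset.sort_nodup _ _) (by simp [ht])]
    simp
  simpa only [orderedProd, List.map_cons, List.prod_cons] using
    exists_prod_map_eq_smul_of_perm hg.exists_mul_eq_smul_mul hperm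

theorem exists_mul_orderedProd (hg : IsMixedCliffordFamily g) (t : ι) (A : Finset ι) :
    ∃ ε : ℤˣ, g t * orderedProd g A = ε • orderedProd g (symmDiff {t} A) := by
  by_cases ht : t ∈ A
  · obtain ⟨ε, hε⟩ := hg.exists_orderedProd_insert (Finset.notMem_erase t A)
    have hA : symmDiff {t} A = A.erase t := by
      rw [symmDiff_of_le (Finset.singleton_subset_iff.mpr ht), Finset.sdiff_singleton_eq_erase]
    rw [Finset.insert_erase ht] at hε
    exact ⟨ε, by rw [hε, hA, mul_smul_comm, ← mul_assoc, hg.mul_self, one_mul]⟩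
  · obtain ⟨ε, hε⟩ := hg.exists_orderedProd_insert ht
    have hA : symmDiff {t} A = insert t A :=
      (Finset.disjoint_singleton_left.mpr ht).symmDiff_eq_sup
    exact ⟨ε⁻¹, by rw [hA, hε, inv_smul_smul]⟩

theorem exists_orderedProd_mul_orderedProd (hg : IsMixedCliffordFamily g) (A B : Finset ι) :
    ∃ ε : ℤˣ, orderedProd g A * orderedProd g B = ε • orderedProd g (symmDiff A B) := by
  induction A using Finset.induction_on with
  | empty => exact ⟨1, by rw [orderedProd_empty, one_mul, one_smul, ← Finset.bot_eq_empty,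
      bot_symmDiff]⟩
  | insert t A ht ih =>
    obtain ⟨α, hα⟩ := hg.exists_orderedProd_insert ht
    obtain ⟨β, hβ⟩ := ih
    obtain ⟨γ, hγ⟩ := hg.exists_mul_orderedProd t (symmDiff A B)
    have hA : symmDiff {t} A = insert t A :=
      (Finset.disjoint_singleton_left.mpr ht).symmDiff_eq_sup
    refine ⟨α * (β * γ), ?_⟩
    calc orderedProd g (insert t A) * orderedProd g B
        = α • β • (g t * orderedProd g (symmDiff A B)) := by
          rw [hα, smul_mul_assoc, mul_assoc, hβ, mul_smul_comm]
      _ = (α * (β * γ)) • orderedProd g (symmDiff (insert t A) B) := by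
          rw [hγ, ← hA, symmDiff_assoc, mul_smul, mul_smul]

theorem span_range_orderedProd_eq_top {K : Type*} [CommRing K] [Algebra K R]
    (hg : IsMixedCliffordFamily g) (hgen : Algebra.adjoin K (Set.range g) = ⊤) :
    Submodule.span K (Set.range (orderedProd g)) = ⊤ := by
  set W := Submodule.span K (Set.range (orderedProd g))
  have mem_W (A : Finset ι) : orderedProd g A ∈ W := Submodule.subset_span ⟨A, rfl⟩
  have mul_mem_W : ∀ x y, x ∈ W → y ∈ W → x * y ∈ W := by
    suffices W * W ≤ W from fun x y hx hy => this (Submodule.mul_mem_mul hx hy)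
    rw [Submodule.span_mul_span, Submodule.span_le]
    rintro _ ⟨_, ⟨A, rfl⟩, _, ⟨B, rfl⟩, rfl⟩
    obtain ⟨ε, hε⟩ := hg.exists_orderedProd_mul_orderedProd A B
    change orderedProd g A * orderedProd g B ∈ W
    rw [hε, Units.smul_def]
    exact zsmul_mem (mem_W _) _
  have one_mem_W : (1 : R) ∈ W := orderedProd_empty g ▸ mem_W ∅
  have gen_mem_W : Set.range g ⊆ W.toSubalgebra one_mem_W mul_mem_W := by
    rintro _ ⟨t, rfl⟩
    simpa [orderedProd] using mem_W {t}
  exact top_le_iff.mp fun x _ => Algebra.adjoin_le gen_mem_W (hgen ▸ Algebra.mem_top)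

theorem exists_map_orderedProd_eq_smul (hg : IsMixedCliffordFamily g) {σ : R → R}
    (hσ_one : σ 1 = 1) (hσ_mul : ∀ x y, σ (x * y) = σ y * σ x) (hσ : ∀ t, σ (g t) = g t)
    (A : Finset ι) : ∃ ε : ℤˣ, σ (orderedProd g A) = ε • orderedProd g A := by
  obtain ⟨ε, hε⟩ := hg.exists_orderedProd_mul_orderedProd A A
  have hinv : ε • (orderedProd g A * orderedProd g A) = 1 := by
    rw [hε, symmDiff_self, Finset.bot_eq_empty, orderedProd_empty, smul_smul, Int.units_mul_self,
      one_smul]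
  refine ⟨ε, ?_⟩
  calc σ (orderedProd g A)
      = σ (orderedProd g A) * orderedProd g A * (ε • orderedProd g A) := by
        rw [mul_assoc, mul_smul_comm, hinv, mul_one]
    _ = ε • orderedProd g A := by
        rw [orderedProd, map_prod_map_mul_prod_map_eq_one hg.mul_self hσ_one hσ_mul hσ, one_mul]

section Functional

variable {K : Type*} [CommRing K] [Algebra K R] {φ : R →ₗ[K] K}

theorem apply_orderedProd_mul_orderedProd_of_ne (hg : IsMixedCliffordFamily g)
    (hφ : ∀ A, A ≠ ∅ → φ (orderedProd g A) = 0) {A B : Finset ι} (hAB : A ≠ B) :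
    φ (orderedProd g A * orderedProd g B) = 0 := by
  obtain ⟨ε, hε⟩ := hg.exists_orderedProd_mul_orderedProd A B
  rw [hε, Units.smul_def, map_zsmul, hφ _ (mt symmDiff_eq_bot.mp hAB), smul_zero]

theorem apply_mul_comm (hg : IsMixedCliffordFamily g)
    (hgen : Algebra.adjoin K (Set.range g) = ⊤)
    (hφ : ∀ A, A ≠ ∅ → φ (orderedProd g A) = 0) (x y : R) : φ (x * y) = φ (y * x) := by
  have hspan := hg.span_range_orderedProd_eq_top hgen
  suffices (LinearMap.mul K R).compr₂ φ = ((LinearMap.mul K R).compr₂ φ).flip from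
    LinearMap.congr_fun₂ this x y
  refine LinearMap.ext_on_range hspan fun A => LinearMap.ext_on_range hspan fun B => ?_
  change φ (orderedProd g A * orderedProd g B) = φ (orderedProd g B * orderedProd g A)
  by_cases hAB : A = B
  · rw [hAB]
  · rw [hg.apply_orderedProd_mul_orderedProd_of_ne hφ hAB,
      hg.apply_orderedProd_mul_orderedProd_of_ne hφ (Ne.symm hAB)]

end Functional

theorem starForm_orderedProd_orderedProd {K : Type*} [CommRing K] [StarRing K] [Algebra K R]
    (hg : IsMixedCliffordFamily g) {φ : R →ₗ[K] K} {σ : R →ₗ⋆[K] R}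
    (hφ : ∀ A, φ (orderedProd g A) = if A = ∅ then 1 else 0)
    (hσ_one : σ 1 = 1) (hσ_mul : ∀ x y, σ (x * y) = σ y * σ x) (hσ : ∀ t, σ (g t) = g t)
    (A B : Finset ι) :
    starForm φ σ (orderedProd g A) (orderedProd g B) = if A = B then 1 else 0 := by
  rw [starForm_apply]
  split_ifs with hAB
  · rw [hAB, orderedProd, map_prod_map_mul_prod_map_eq_one hg.mul_self hσ_one hσ_mul hσ,
      ← orderedProd_empty g, hφ, if_pos rfl]
  · obtain ⟨ε, hε⟩ := hg.exists_map_orderedProd_eq_smul hσ_one hσ_mul hσ A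
    rw [hε, smul_mul_assoc, Units.smul_def, map_zsmul,
      hg.apply_orderedProd_mul_orderedProd_of_ne (fun C hC => by rw [hφ, if_neg hC]) hAB, smul_zero]

end IsMixedCliffordFamily

section MixedCliffordAlgebra

variable {S : Type*} [DecidableEq S] (s : S → S → ℝ)

theorem adjoin_range_mixedCliffordGen :
    Algebra.adjoin ℂ (Set.range (mixedCliffordGen s)) = ⊤ := by
  have hrange : Set.range (mixedCliffordGen s) =
      RingQuot.mkAlgHom ℂ (MixedCliffordRel s) '' Set.range (FreeAlgebra.ι ℂ) :=
    Set.range_comp _ _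
  rw [hrange, ← AlgHom.map_adjoin, FreeAlgebra.adjoin_range_ι, Algebra.map_top,
    AlgHom.range_eq_top]
  exact RingQuot.mkAlgHom_surjective ℂ _

theorem mixedCliffordGen_mul_mixedCliffordGen (t u : S) :
    mixedCliffordGen s t * mixedCliffordGen s u =
      (s t u : ℂ) • (mixedCliffordGen s u * mixedCliffordGen s t) + if t = u then 2 else 0 := by
  have h := RingQuot.mkAlgHom_rel ℂ (MixedCliffordRel.rel (s := s) t u)
  rw [map_mul, map_add, map_smul, map_mul, apply_ite (RingQuot.mkAlgHom ℂ _), map_ofNat,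
    map_zero] at h
  exact h

end MixedCliffordAlgebra

theorem stmt_13_general {S : Type*} [LinearOrder S]
    (s : S → S → ℝ)
    (hval : ∀ t u, s t u = 1 ∨ s t u = -1) (hdiag : ∀ t, s t t = -1)
    (φ : MixedCliffordAlgebra s →ₗ[ℂ] ℂ)
    (hφ : ∀ A : Finset S, φ (mixedCliffordBasisElem s A) = if A = ∅ then 1 else 0)
    (st : MixedCliffordAlgebra s →ₗ⋆[ℂ] MixedCliffordAlgebra s)
    (hst1 : st 1 = 1)
    (hstmul : ∀ x y, st (x * y) = st y * st x)
    (hstgen : ∀ t, st (mixedCliffordGen s t) = mixedCliffordGen s t) :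
    φ 1 = 1 ∧
      (∀ x y, φ (x * y) = φ (y * x)) ∧
      (∀ x, 0 ≤ φ (st x * x)) ∧
      (∀ x, φ (st x * x) = 0 → x = 0) := by
  have hg : IsMixedCliffordFamily (mixedCliffordGen s) :=
    isMixedCliffordFamily_of_mul_eq (s := fun t u => (s t u : ℂ)) (fun t u => mod_cast hval t u)
      (fun t => mod_cast hdiag t) (mixedCliffordGen_mul_mixedCliffordGen s)
  have hgen := adjoin_range_mixedCliffordGen s
  have hspan := hg.span_range_orderedProd_eq_top hgen
  have horth := hg.starForm_orderedProd_orderedProd hφ hst1 hstmul hstgen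
  have hone : φ 1 = 1 := by rw [← orderedProd_empty (mixedCliffordGen s)]; exact hφ ∅
  have htrace := hg.apply_mul_comm hgen fun A hA => (hφ A).trans (if_neg hA)
  exact ⟨hone, htrace, apply_self_nonneg_of_orthonormal horth hspan,
    fun _ => eq_zero_of_apply_self_eq_zero_of_orthonormal horth hspan⟩

/-- Let `S` be a finite linearly ordered set and `s : S×S → {−1,1}` with
`s(t,u) = s(u,t)`, `s(t,t) = −1`.  The linear functional `φ : 𝒜 → ℂ` determined by
`φ(x_A) = δ_{A,∅}` is a faithful tracial state on `𝒜`: `φ(1) = 1`, `φ(xy) = φ(yx)`, and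
`φ(x*x) ≥ 0` with equality only for `x = 0`, where `*` is the (unique) antilinear
antiautomorphism of `𝒜` fixing the generators `x_t`.  Consequently `⟨x,y⟩ := φ(y*x)` is an
inner product on `𝒜`. -/
theorem stmt_13 {S : Type*} [Fintype S] [LinearOrder S]
    (s : S → S → ℝ) (hsym : ∀ t u, s t u = s u t)
    (hval : ∀ t u, s t u = 1 ∨ s t u = -1) (hdiag : ∀ t, s t t = -1)
    (φ : MixedCliffordAlgebra s →ₗ[ℂ] ℂ)
    (hφ : ∀ A : Finset S, φ (mixedCliffordBasisElem s A) = if A = ∅ then 1 else 0)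
    (st : MixedCliffordAlgebra s →ₗ⋆[ℂ] MixedCliffordAlgebra s)
    (hst1 : st 1 = 1)
    (hstmul : ∀ x y, st (x * y) = st y * st x)
    (hstgen : ∀ t, st (mixedCliffordGen s t) = mixedCliffordGen s t) :
    φ 1 = 1 ∧
      (∀ x y, φ (x * y) = φ (y * x)) ∧
      (∀ x, 0 ≤ φ (st x * x)) ∧
      (∀ x, φ (st x * x) = 0 → x = 0) := by
  exact stmt_13_general s hval hdiag φ hφ st hst1 hstmul hstgen
end
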